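/- Let μ be any σ-invariant Borel probability measure on X. For every k ∈ ℕ, 1 / h (k+1) < μ(S k) < b / h (k+1), where S k = { x ∈ X : the block x_{−h k} … x_{h k} equals the word B k ++ [1] ++ B k }. -/

import Mathlib

open MeasureTheory Filter Topology
open scoped ENNReal

/-- `m`-fold concatenation of a word. -/
def wordPow (w : List ℕ) (m : ℕ) : List ℕ := (List.replicate m w).flatten

/-- The words of the generalized del Junco–Rudolph construction:
`B 0 = [0]`, `B (k+1) = (B k)^(a·b^k) ++ [1] ++ (B k)^((b-a)·b^k)`. -/
def Bword (b a : ℕ) : ℕ → List ℕ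
  | 0 => [0]
  | k + 1 => wordPow (Bword b a k) (a * b ^ k) ++ [1] ++ wordPow (Bword b a k) ((b - a) * b ^ k)

/-- The height sequence: `h 0 = 1`, `h (k+1) = b^(k+1) * h k + 1`. -/
def hseq (b : ℕ) : ℕ → ℕ
  | 0 => 1
  | k + 1 => b ^ (k + 1) * hseq b k + 1

/-- The word `w` occurs in the word `v` at position `p` (0-based). -/
def OccursAt (w v : List ℕ) (p : ℕ) : Prop :=
  p + w.length ≤ v.length ∧ (v.drop p).take w.length = w

/-- The block of `x` of length `w.length` starting at index `m` equals the word `w`. -/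
def BlockEq (x : ℤ → ℕ) (m : ℤ) (w : List ℕ) : Prop :=
  ∀ i : ℕ, i < w.length → x (m + i) = w.getD i 0

/-- Membership in the subshift `X`: every finite block of `x` occurs as a consecutive
subword of some `B k`. -/
def InX (b a : ℕ) (x : ℤ → ℕ) : Prop :=
  ∀ (m : ℤ) (l : ℕ), ∃ k p, OccursAt (List.ofFn fun i : Fin l => x (m + (i : ℕ))) (Bword b a k) p

/-- The left shift `(σ x) n = x (n+1)` on `{0,1}^ℤ`. -/
def shiftMap (x : ℤ → ℕ) : ℤ → ℕ := fun n => x (n + 1)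

/-- The set `S k = {x ∈ X : x_{-h k} … x_{h k} = B k 1 B k}`. -/
def Sset (b a k : ℕ) : Set (ℤ → ℕ) :=
  {x | InX b a x ∧ BlockEq x (-(hseq b k : ℤ)) (Bword b a k ++ [1] ++ Bword b a k)}

/-- marked words -/
def Mw (b a : ℕ) : ℕ → List ℕ
  | 0 => [0]
  | k + 1 => wordPow (Mw b a k) (a * b ^ k) ++ [k + 1] ++ wordPow (Mw b a k) ((b - a) * b ^ k)

lemma wordPow_succ (w : List ℕ) (m : ℕ) : wordPow w (m + 1) = w ++ wordPow w m := by
  simp [wordPow, List.replicate_succ]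

lemma wordPow_succ' (w : List ℕ) (m : ℕ) : wordPow w (m + 1) = wordPow w m ++ w := by
  simp [wordPow, List.replicate_succ']

lemma wordPow_length (w : List ℕ) (m : ℕ) : (wordPow w m).length = m * w.length := by
  simp [wordPow]

lemma wordPow_map (f : ℕ → ℕ) (w : List ℕ) (m : ℕ) :
    (wordPow w m).map f = wordPow (w.map f) m := by
  simp [wordPow, List.map_flatten]

lemma wordPow_closed (R : List ℕ → Prop) (hR : ∀ v w, R v → R w → R (v ++ w)) (w : List ℕ)
    (hw : R w) (m : ℕ) (hm : 1 ≤ m) : R (wordPow w m) := by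
  induction m, hm using Nat.le_induction with
  | base => simpa [wordPow] using hw
  | succ m _ ih => rw [wordPow_succ]; exact hR _ _ hw ih

lemma Bword_eq_map (b a n : ℕ) : Bword b a n = (Mw b a n).map (min 1) := by
  induction n with
  | zero => simp [Bword, Mw]
  | succ n ih => simp [Bword, Mw, wordPow_map, ih]

section
variable {b a : ℕ} (hb : 2 ≤ b) (ha1 : 1 ≤ a) (ha2 : a ≤ b - 1)

lemma Mw_length (ha2 : a ≤ b - 1) (n : ℕ) : (Mw b a n).length = hseq b n := by
  induction n with
  | zero => simp [Mw, hseq]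
  | succ n ih =>
    obtain ⟨d, rfl⟩ : ∃ d, b = a + d := ⟨b - a, by omega⟩
    simp [Mw, hseq, wordPow_length, ih]
    ring

lemma Bword_length (ha2 : a ≤ b - 1) (n : ℕ) : (Bword b a n).length = hseq b n := by
  rw [Bword_eq_map, List.length_map, Mw_length ha2]

lemma hseq_lt (hb : 2 ≤ b) (n : ℕ) : hseq b n < hseq b (n + 1) := by
  have : 1 ≤ b ^ (n + 1) := Nat.one_le_pow _ _ (by omega)
  simp only [hseq]
  nlinarith

lemma hseq_pos (n : ℕ) : 1 ≤ hseq b n := by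
  cases n <;> simp [hseq]

lemma hseq_mono (hb : 2 ≤ b) : StrictMono (hseq b) := strictMono_nat_of_lt_succ (hseq_lt hb)

lemma hseq_split (ha2 : a ≤ b - 1) (k : ℕ) :
    hseq b (k + 1) = a * b ^ k * hseq b k + (b - a) * b ^ k * hseq b k + 1 := by
  obtain ⟨d, hd⟩ : ∃ d, b = a + d := ⟨b - a, by omega⟩
  have : b - a = d := by omega
  rw [this]
  simp only [hseq, pow_succ]
  nth_rw 2 [hd]
  ring

lemma Mw_closed (hb : 2 ≤ b) (ha1 : 1 ≤ a) (ha2 : a ≤ b - 1) (R : List ℕ → Prop) (k : ℕ)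
    (h0 : R (Mw b a k))
    (hR : ∀ v w, R v → R w → R (v ++ w)) (hR1 : ∀ v w c, k + 1 ≤ c → R v → R w → R (v ++ [c] ++ w))
    (n : ℕ) (hn : k ≤ n) : R (Mw b a n) := by
  have hp : ∀ n, 1 ≤ b ^ n := fun n => Nat.one_le_pow _ _ (by omega)
  induction n, hn using Nat.le_induction with
  | base => exact h0
  | succ n hn ih =>
    simp only [Mw]
    apply hR1 _ _ _ (by omega)
    · exact wordPow_closed R hR _ ih _ (Nat.mul_pos ha1 (hp n))
    · exact wordPow_closed R hR _ ih _ (Nat.mul_pos (by omega) (hp n))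

lemma Bword_closed (hb : 2 ≤ b) (ha1 : 1 ≤ a) (ha2 : a ≤ b - 1) (R : List ℕ → Prop) (k : ℕ)
    (h0 : R (Bword b a k))
    (hR : ∀ v w, R v → R w → R (v ++ w)) (hR1 : ∀ v w, R v → R w → R (v ++ [1] ++ w))
    (n : ℕ) (hn : k ≤ n) : R (Bword b a n) := by
  have hp : ∀ n, 1 ≤ b ^ n := fun n => Nat.one_le_pow _ _ (by omega)
  induction n, hn using Nat.le_induction with
  | base => exact h0
  | succ n hn ih =>
    simp only [Bword]
    apply hR1 _ _
    · exact wordPow_closed R hR _ ih _ (Nat.mul_pos ha1 (hp n))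
    · exact wordPow_closed R hR _ ih _ (Nat.mul_pos (by omega) (hp n))

lemma mem_wordPow {x : ℕ} {w : List ℕ} {m : ℕ} (h : x ∈ wordPow w m) : x ∈ w := by
  simp only [wordPow, List.mem_flatten, List.mem_replicate] at h
  obtain ⟨l, ⟨_, rfl⟩, h⟩ := h
  exact h

lemma Mw_le (n : ℕ) : ∀ x ∈ Mw b a n, x ≤ n := by
  induction n with
  | zero => simp [Mw]
  | succ n ih =>
    intro x hx
    simp only [Mw, List.mem_append, List.mem_singleton] at hx
    rcases hx with (hx | hx) | hx
    · have := ih x (mem_wordPow hx); omega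
    · omega
    · have := ih x (mem_wordPow hx); omega

lemma getD_le_of_mem {w : List ℕ} {n : ℕ} (h : ∀ x ∈ w, x ≤ n) (i : ℕ) : w.getD i 0 ≤ n := by
  by_cases hi : i < w.length
  · rw [List.getD_eq_getElem _ _ hi]; exact h _ (List.getElem_mem hi)
  · rw [List.getD_eq_default _ _ (by omega)]; omega

lemma getD_app (v w : List ℕ) (i : ℕ) :
    (v ++ w).getD i 0 = if i < v.length then v.getD i 0 else w.getD (i - v.length) 0 := by
  split_ifs with h
  · exact List.getD_append _ _ _ _ h
  · exact List.getD_append_right _ _ _ _ (by omega)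

lemma getD_sing (c : ℕ) (i : ℕ) : [c].getD i 0 = if i = 0 then c else 0 := by
  cases i <;> simp

/-- gap property -/
def PGap (k α α' : ℕ) (w : List ℕ) : Prop :=
  (α + α' + 1 ≤ w.length) ∧
  (∀ i, w.getD i 0 = k + 1 → α ≤ i ∧ i + α' + 1 ≤ w.length) ∧
  (∀ i, k + 1 < w.getD i 0 → α + α' + 1 ≤ i ∧ i + (α + α' + 1) + 1 ≤ w.length) ∧
  (∀ i j, i < j → w.getD i 0 = k + 1 → k + 1 ≤ w.getD j 0 → i + α' + 1 ≤ j) ∧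
  (∀ i j, i < j → k + 1 ≤ w.getD i 0 → w.getD j 0 = k + 1 → i + α + 1 ≤ j) ∧
  (∀ i j, i < j → w.getD i 0 = k + 1 → w.getD j 0 = k + 1 → i + (α + α' + 1) ≤ j) ∧
  (∀ i j, i < j → k + 1 < w.getD i 0 → k + 1 < w.getD j 0 → i + (α + α' + 1) + 1 ≤ j)

lemma lt_len_of_getD {w : List ℕ} {i : ℕ} (h : 0 < w.getD i 0) : i < w.length := by
  by_contra h'
  rw [List.getD_eq_default _ _ (by omega)] at h; omega

set_option maxHeartbeats 1000000 in
lemma PGap_app {k α α' : ℕ} (v w : List ℕ) (hv : PGap k α α' v) (hw : PGap k α α' w) :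
    PGap k α α' (v ++ w) := by
  obtain ⟨v0, v1, v2, v3, v4, v5, v6⟩ := hv
  obtain ⟨w0, w1, w2, w3, w4, w5, w6⟩ := hw
  refine ⟨?_, ?_, ?_, ?_, ?_, ?_, ?_⟩
  · simp; omega
  · intro i; have := v1 i; have := w1 (i - v.length)
    rw [getD_app, List.length_append]; split_ifs <;> omega
  · intro i; have := v2 i; have := w2 (i - v.length)
    rw [getD_app, List.length_append]; split_ifs <;> omega
  · intro i j
    have := v1 i; have := w1 (j - v.length); have := v2 i; have := w2 (j - v.length)
    have := v3 i j; have := w3 (i - v.length) (j - v.length)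
    clear v1 v2 v3 v4 v5 v6 w1 w2 w3 w4 w5 w6
    rw [getD_app, getD_app]
    split_ifs <;> omega
  · intro i j
    have := v1 i; have := w1 (j - v.length); have := v2 i; have := w2 (j - v.length)
    have := v4 i j; have := w4 (i - v.length) (j - v.length)
    clear v1 v2 v3 v4 v5 v6 w1 w2 w3 w4 w5 w6
    rw [getD_app, getD_app]
    split_ifs <;> omega
  · intro i j
    have := v1 i; have := w1 (j - v.length); have := v2 i; have := w2 (j - v.length)
    have := v5 i j; have := w5 (i - v.length) (j - v.length)
    clear v1 v2 v3 v4 v5 v6 w1 w2 w3 w4 w5 w6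
    rw [getD_app, getD_app]
    split_ifs <;> omega
  · intro i j
    have := v1 i; have := w1 (j - v.length); have := v2 i; have := w2 (j - v.length)
    have := v6 i j; have := w6 (i - v.length) (j - v.length)
    clear v1 v2 v3 v4 v5 v6 w1 w2 w3 w4 w5 w6
    rw [getD_app, getD_app]
    split_ifs <;> omega

set_option maxHeartbeats 1000000 in
lemma PGap_app1 {k α α' : ℕ} (v w : List ℕ) (c : ℕ) (hc : k + 1 + 1 ≤ c)
    (hv : PGap k α α' v) (hw : PGap k α α' w) :
    PGap k α α' (v ++ [c] ++ w) := by
  obtain ⟨v0, v1, v2, v3, v4, v5, v6⟩ := hv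
  obtain ⟨w0, w1, w2, w3, w4, w5, w6⟩ := hw
  refine ⟨?_, ?_, ?_, ?_, ?_, ?_, ?_⟩
  · simp; omega
  · intro i; have := v1 i; have := w1 (i - (v.length + 1))
    simp only [getD_app, getD_sing, List.length_append, List.length_singleton]
    split_ifs <;> omega
  · intro i; have := v2 i; have := w2 (i - (v.length + 1))
    simp only [getD_app, getD_sing, List.length_append, List.length_singleton]
    split_ifs <;> omega
  · intro i j
    have := v1 i; have := w1 (j - (v.length + 1)); have := v2 i; have := w2 (j - (v.length + 1))
    have := v3 i j; have := w3 (i - (v.length + 1)) (j - (v.length + 1))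
    clear v1 v2 v3 v4 v5 v6 w1 w2 w3 w4 w5 w6
    simp only [getD_app, getD_sing, List.length_append, List.length_singleton]
    split_ifs <;> omega
  · intro i j
    have := v1 i; have := w1 (j - (v.length + 1)); have := v2 i; have := w2 (j - (v.length + 1))
    have := v4 i j; have := w4 (i - (v.length + 1)) (j - (v.length + 1))
    clear v1 v2 v3 v4 v5 v6 w1 w2 w3 w4 w5 w6
    simp only [getD_app, getD_sing, List.length_append, List.length_singleton]
    split_ifs <;> omega
  · intro i j
    have := v1 i; have := w1 (j - (v.length + 1)); have := v2 i; have := w2 (j - (v.length + 1))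
    have := v5 i j; have := w5 (i - (v.length + 1)) (j - (v.length + 1))
    clear v1 v2 v3 v4 v5 v6 w1 w2 w3 w4 w5 w6
    simp only [getD_app, getD_sing, List.length_append, List.length_singleton]
    split_ifs <;> omega
  · intro i j
    have := v1 i; have := w1 (j - (v.length + 1)); have := v2 i; have := w2 (j - (v.length + 1))
    have := v6 i j; have := w6 (i - (v.length + 1)) (j - (v.length + 1))
    clear v1 v2 v3 v4 v5 v6 w1 w2 w3 w4 w5 w6
    simp only [getD_app, getD_sing, List.length_append, List.length_singleton]
    split_ifs <;> omega

lemma PGap_base (ha2 : a ≤ b - 1) (k : ℕ) :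
    PGap k (a * b ^ k * hseq b k) ((b - a) * b ^ k * hseq b k) (Mw b a (k + 1)) := by
  have hl := Mw_length ha2 (k + 1)
  have hs := hseq_split ha2 k
  have key : ∀ i, k + 1 ≤ (Mw b a (k + 1)).getD i 0 → i = a * b ^ k * hseq b k ∧
      (Mw b a (k + 1)).getD i 0 = k + 1 := by
    intro i
    have h1 := getD_le_of_mem (n := k) (w := wordPow (Mw b a k) (a * b ^ k))
      (fun x hx => Mw_le k x (mem_wordPow hx)) i
    have h2 := getD_le_of_mem (n := k) (w := wordPow (Mw b a k) ((b - a) * b ^ k))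
      (fun x hx => Mw_le k x (mem_wordPow hx)) (i - (a * b ^ k * hseq b k + 1))
    simp only [Mw, getD_app, getD_sing, List.length_append, List.length_singleton, wordPow_length,
      Mw_length ha2]
    split_ifs <;> omega
  refine ⟨by omega, ?_, ?_, ?_, ?_, ?_, ?_⟩
  · intro i h; have := key i; omega
  · intro i h; have := key i; omega
  all_goals
    intro i j; have := key i; have := key j; omega

lemma PGap_Mw (hb : 2 ≤ b) (ha1 : 1 ≤ a) (ha2 : a ≤ b - 1) (k n : ℕ) (hn : k + 1 ≤ n) :
    PGap k (a * b ^ k * hseq b k) ((b - a) * b ^ k * hseq b k) (Mw b a n) :=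
  Mw_closed hb ha1 ha2 _ (k + 1) (PGap_base ha2 k) PGap_app PGap_app1 n hn

lemma gap_Mw (hb : 2 ≤ b) (ha1 : 1 ≤ a) (ha2 : a ≤ b - 1) (k n i j : ℕ) (hij : i < j)
    (hi : k + 1 ≤ (Mw b a n).getD i 0) (hj : k + 1 ≤ (Mw b a n).getD j 0) :
    i + b ^ k * hseq b k + 1 ≤ j := by
  have hn : k + 1 ≤ n := hi.trans (getD_le_of_mem (Mw_le n) i)
  obtain ⟨v0, v1, v2, v3, v4, v5, v6⟩ := PGap_Mw hb ha1 ha2 k n hn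
  have e1 : b ^ k * hseq b k ≤ a * b ^ k * hseq b k := by
    rw [mul_assoc]; exact Nat.le_mul_of_pos_left _ ha1
  have e2 : b ^ k * hseq b k ≤ (b - a) * b ^ k * hseq b k := by
    rw [mul_assoc]; exact Nat.le_mul_of_pos_left _ (by omega)
  have := v3 i j hij
  have := v4 i j hij
  have := v6 i j hij
  omega

/-- occurrence with center i -/
def Occ (b a k : ℕ) (w : List ℕ) (i : ℕ) : Prop :=
  ∃ v v', w = v ++ (Bword b a k ++ [1] ++ Bword b a k) ++ v' ∧ v.length + hseq b k = i

lemma Occ.app {k : ℕ} {w : List ℕ} {i : ℕ} (h : Occ b a k w i) (z : List ℕ) :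
    Occ b a k (w ++ z) i := by
  obtain ⟨v, v', rfl, h⟩ := h
  exact ⟨v, v' ++ z, by simp, h⟩

lemma Occ.pre {k : ℕ} {w : List ℕ} {i : ℕ} (h : Occ b a k w i) (z : List ℕ) :
    Occ b a k (z ++ w) (z.length + i) := by
  obtain ⟨v, v', rfl, h⟩ := h
  exact ⟨z ++ v, v', by simp, by simp; omega⟩

lemma Bword_succ_decomp (hb : 2 ≤ b) (ha1 : 1 ≤ a) (ha2 : a ≤ b - 1) (k : ℕ) : ∃ y y',
    Bword b a (k + 1) = y ++ (Bword b a k ++ [1] ++ Bword b a k) ++ y' ∧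
    y.length + hseq b k = a * b ^ k * hseq b k := by
  have hp : 1 ≤ b ^ k := Nat.one_le_pow _ _ (by omega)
  obtain ⟨m, hm⟩ : ∃ m, a * b ^ k = m + 1 := ⟨a * b ^ k - 1, by have := Nat.mul_pos ha1 hp; omega⟩
  obtain ⟨m', hm'⟩ : ∃ m', (b - a) * b ^ k = m' + 1 :=
    ⟨(b - a) * b ^ k - 1, by have := Nat.mul_pos (show 0 < b - a by omega) hp; omega⟩
  refine ⟨wordPow (Bword b a k) m, wordPow (Bword b a k) m', ?_, ?_⟩
  · simp only [Bword]
    rw [hm, hm', wordPow_succ', wordPow_succ]; simp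
  · rw [wordPow_length, Bword_length ha2, hm]; ring

lemma Bword_prefix (hb : 2 ≤ b) (ha1 : 1 ≤ a) (ha2 : a ≤ b - 1) (k : ℕ) :
    (∃ y, Bword b a (k + 1) = Bword b a k ++ y) ∧ (∃ y, Bword b a (k + 1) = y ++ Bword b a k) := by
  have hp : 1 ≤ b ^ k := Nat.one_le_pow _ _ (by omega)
  obtain ⟨m, hm⟩ : ∃ m, a * b ^ k = m + 1 := ⟨a * b ^ k - 1, by have := Nat.mul_pos ha1 hp; omega⟩
  obtain ⟨m', hm'⟩ : ∃ m', (b - a) * b ^ k = m' + 1 :=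
    ⟨(b - a) * b ^ k - 1, by have := Nat.mul_pos (show 0 < b - a by omega) hp; omega⟩
  simp only [Bword]
  rw [hm, hm', wordPow_succ, wordPow_succ']
  exact ⟨⟨_, by simp only [List.append_assoc]; rfl⟩, ⟨_, by rw [← List.append_assoc]⟩⟩

lemma Occ_base (hb : 2 ≤ b) (ha1 : 1 ≤ a) (ha2 : a ≤ b - 1) (k : ℕ) :
    Occ b a k (Bword b a (k + 1)) (a * b ^ k * hseq b k) :=
  Bword_succ_decomp hb ha1 ha2 k

lemma Occ_mid (ha2 : a ≤ b - 1) (k : ℕ) {v w : List ℕ} (hv : ∃ y, v = y ++ Bword b a k)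
    (hw : ∃ y, w = Bword b a k ++ y) : Occ b a k (v ++ [1] ++ w) v.length := by
  obtain ⟨y, rfl⟩ := hv
  obtain ⟨y', rfl⟩ := hw
  exact ⟨y, y', by simp, by simp [Bword_length ha2]⟩

lemma Occ_succ (hb : 2 ≤ b) (ha1 : 1 ≤ a) (ha2 : a ≤ b - 1) {k : ℕ} {w : List ℕ} {i : ℕ}
    (h : Occ b a (k + 1) w i) : Occ b a k w i ∧
      (b - a) * b ^ k * hseq b k + 1 ≤ i ∧
      Occ b a k w (i - ((b - a) * b ^ k * hseq b k + 1)) ∧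
      Occ b a k w (i + (a * b ^ k * hseq b k + 1)) := by
  obtain ⟨v, v', rfl, rfl⟩ := h
  have hs := hseq_split ha2 k
  have hl := Bword_length ha2 (k + 1)
  refine ⟨?_, by omega, ?_, ?_⟩
  · have := ((Occ_mid ha2 k (Bword_prefix hb ha1 ha2 k).2 (Bword_prefix hb ha1 ha2 k).1).pre v).app v'
    rwa [hl] at this
  · have := ((((Occ_base hb ha1 ha2 k).app [1]).app (Bword b a (k + 1))).pre v).app v'
    convert this using 1; omega
  · have := (((Occ_base hb ha1 ha2 k).pre (Bword b a (k + 1) ++ [1])).pre v).app v'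
    convert this using 1; simp only [List.length_append, hl, List.length_singleton]; omega

lemma Occ_level (hb : 2 ≤ b) (ha1 : 1 ≤ a) (ha2 : a ≤ b - 1) (n k : ℕ) : ∀ i,
    Occ b a k (Bword b a n) i → k + 1 ≤ (Mw b a n).getD i 0 := by
  induction k with
  | zero =>
    rintro i ⟨v, v', h, rfl⟩
    have h1 : (Bword b a n).getD (v.length + 1) 0 = 1 := by
      rw [h]; simp [Bword]
    rw [Bword_eq_map] at h1
    have : ((Mw b a n).map (min 1)).getD (v.length + 1) (min 1 0) = 1 := h1
    rw [List.getD_map] at this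
    simp only [hseq]; omega
  | succ k ih =>
    intro i hi
    obtain ⟨h0, hle, hl, hr⟩ := Occ_succ hb ha1 ha2 hi
    have h0 := ih _ h0
    have hl := ih _ hl
    have hr := ih _ hr
    by_contra hlt
    have heq : (Mw b a n).getD i 0 = k + 1 := by omega
    have hn : k + 1 ≤ n := h0.trans (getD_le_of_mem (Mw_le n) i)
    obtain ⟨v0, v1, v2, v3, v4, v5, v6⟩ := PGap_Mw hb ha1 ha2 k n hn
    have hs := hseq_split ha2 k
    have hpos : 1 ≤ b ^ k * hseq b k := Nat.mul_pos (Nat.pow_pos (by omega)) (hseq_pos k)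
    rw [mul_assoc] at hle hl hr
    simp only [mul_assoc] at v3 v4 v5 hs
    set α := a * (b ^ k * hseq b k) with hα
    set α' := (b - a) * (b ^ k * hseq b k) with hα'
    have A1 := v4 _ _ (by omega) hl heq
    have A2 := v3 _ _ (by omega) heq hr
    have e : α = α' := by omega
    have hα0 : 1 ≤ α := Nat.mul_pos ha1 hpos
    have B1 := v5 (i - (α' + 1)) i (by omega)
    have B2 := v5 i (i + (α + 1)) (by omega) heq
    have G := gap_Mw hb ha1 ha2 (k + 1) n (i - (α' + 1)) (i + (α + 1)) (by omega) (by omega)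
      (by omega)
    have : 2 * hseq b (k + 1) ≤ b ^ (k + 1) * hseq b (k + 1) := by
      apply Nat.mul_le_mul_right
      calc 2 ≤ b := hb
        _ ≤ b ^ (k + 1) := Nat.le_self_pow (by omega) b
    omega

/-- window property -/
def QWin (b a k : ℕ) (w : List ℕ) : Prop :=
  (∃ y, w = Bword b a (k + 1) ++ y) ∧ (∃ y, w = y ++ Bword b a (k + 1)) ∧
  ∀ p, p + hseq b (k + 1) ≤ w.length → ∃ i, p ≤ i ∧ i < p + hseq b (k + 1) ∧ Occ b a k w i

lemma QWin_app (hb : 2 ≤ b) (ha1 : 1 ≤ a) (ha2 : a ≤ b - 1) (k : ℕ) (v w : List ℕ)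
    (hv : QWin b a k v) (hw : QWin b a k w) : QWin b a k (v ++ w) := by
  obtain ⟨⟨y1, hy1⟩, ⟨y2, hy2⟩, v3⟩ := hv
  obtain ⟨⟨z1, hz1⟩, ⟨z2, hz2⟩, w3⟩ := hw
  have hl := Bword_length ha2 (k + 1)
  have hs := hseq_split ha2 k
  refine ⟨⟨y1 ++ w, by rw [hy1]; simp⟩, ⟨v ++ z2, by rw [hz2]; simp⟩, ?_⟩
  intro p hp
  rw [List.length_append] at hp
  have hvl : v.length = y2.length + hseq b (k + 1) := by rw [hy2, List.length_append, hl]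
  rcases le_or_gt (p + hseq b (k + 1)) v.length with h | h
  · obtain ⟨i, h1, h2, h3⟩ := v3 p h
    exact ⟨i, h1, h2, h3.app _⟩
  rcases le_or_gt v.length p with h' | h'
  · obtain ⟨i, h1, h2, h3⟩ := w3 (p - v.length) (by omega)
    exact ⟨v.length + i, by omega, by omega, h3.pre _⟩
  rcases le_or_gt p (y2.length + a * b ^ k * hseq b k) with h4 | h4
  · refine ⟨_, h4, by omega, ?_⟩
    rw [hy2]
    exact ((Occ_base hb ha1 ha2 k).pre y2).app w
  · refine ⟨v.length + a * b ^ k * hseq b k, by omega, by omega, ?_⟩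
    rw [hz1]
    exact ((Occ_base hb ha1 ha2 k).app z1).pre v

lemma QWin_app1 (hb : 2 ≤ b) (ha1 : 1 ≤ a) (ha2 : a ≤ b - 1) (k : ℕ) (v w : List ℕ)
    (hv : QWin b a k v) (hw : QWin b a k w) : QWin b a k (v ++ [1] ++ w) := by
  obtain ⟨⟨y1, hy1⟩, ⟨y2, hy2⟩, v3⟩ := hv
  obtain ⟨⟨z1, hz1⟩, ⟨z2, hz2⟩, w3⟩ := hw
  have hl := Bword_length ha2 (k + 1)
  have hs := hseq_split ha2 k
  refine ⟨⟨y1 ++ [1] ++ w, by rw [hy1]; simp⟩, ⟨v ++ [1] ++ z2, by rw [hz2]; simp⟩, ?_⟩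
  intro p hp
  rw [List.length_append, List.length_append, List.length_singleton] at hp
  have hvl : v.length = y2.length + hseq b (k + 1) := by rw [hy2, List.length_append, hl]
  rcases le_or_gt (p + hseq b (k + 1)) v.length with h | h
  · obtain ⟨i, h1, h2, h3⟩ := v3 p h
    exact ⟨i, h1, h2, (h3.app _).app _⟩
  rcases lt_or_ge v.length p with h' | h'
  · obtain ⟨i, h1, h2, h3⟩ := w3 (p - (v.length + 1)) (by omega)
    refine ⟨v.length + 1 + i, by omega, by omega, ?_⟩
    have := h3.pre (v ++ [1])
    rwa [List.length_append, List.length_singleton] at this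
  refine ⟨v.length, h', by omega, ?_⟩
  obtain ⟨⟨q1, hq1⟩, ⟨q2, hq2⟩⟩ := Bword_prefix hb ha1 ha2 k
  exact Occ_mid ha2 k ⟨y2 ++ q2, by rw [hy2, hq2]; simp⟩ ⟨q1 ++ z1, by rw [hz1, hq1]; simp⟩

lemma QWin_Bword (hb : 2 ≤ b) (ha1 : 1 ≤ a) (ha2 : a ≤ b - 1) (k n : ℕ) (hn : k + 1 ≤ n) :
    QWin b a k (Bword b a n) := by
  refine Bword_closed hb ha1 ha2 _ (k + 1) ?_ (QWin_app hb ha1 ha2 k) (QWin_app1 hb ha1 ha2 k) n hn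
  refine ⟨⟨[], by simp⟩, ⟨[], by simp⟩, ?_⟩
  intro p hp
  rw [Bword_length ha2] at hp
  have hs := hseq_split ha2 k
  exact ⟨_, by omega, by omega, Occ_base hb ha1 ha2 k⟩

lemma infix_iff (w c : List ℕ) (p : ℕ) : (∃ v v', w = v ++ c ++ v' ∧ v.length = p) ↔
    p + c.length ≤ w.length ∧ ∀ t < c.length, w.getD (p + t) 0 = c.getD t 0 := by
  constructor
  · rintro ⟨v, v', rfl, rfl⟩
    refine ⟨by simp, fun t ht => ?_⟩
    simp only [getD_app, List.length_append]
    rw [if_pos (by omega), if_neg (by omega)]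
    congr 1; omega
  · rintro ⟨h1, h2⟩
    refine ⟨w.take p, w.drop (p + c.length), ?_, by simp; omega⟩
    have : c = (w.drop p).take c.length := by
      apply List.ext_getElem
      · simp; omega
      · intro t ht ht'
        have := h2 t ht
        rw [List.getD_eq_getElem _ _ (by omega), List.getD_eq_getElem _ _ ht] at this
        simp [this]
    conv_rhs => rw [this]
    rw [List.append_assoc, ← List.drop_drop]
    conv_rhs => enter [2, 2]; rw [← this]
    rw [List.take_append_drop, List.take_append_drop]

/-- center word -/
def Cw (b a k : ℕ) : List ℕ := Bword b a k ++ [1] ++ Bword b a k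

lemma Cw_length (ha2 : a ≤ b - 1) (k : ℕ) : (Cw b a k).length = 2 * hseq b k + 1 := by
  simp [Cw, Bword_length ha2]; omega

lemma Occ_iff (ha2 : a ≤ b - 1) (k : ℕ) (w : List ℕ) (p : ℕ) : Occ b a k w (p + hseq b k) ↔
    p + (2 * hseq b k + 1) ≤ w.length ∧
      ∀ t < 2 * hseq b k + 1, w.getD (p + t) 0 = (Cw b a k).getD t 0 := by
  have := infix_iff w (Cw b a k) p
  rw [Cw_length ha2] at this
  rw [← this]
  simp [Occ, Cw]

/-- x has an occurrence centered at i -/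
def XO (b a k : ℕ) (x : ℤ → ℕ) (i : ℤ) : Prop :=
  BlockEq x (i - (hseq b k : ℤ)) (Cw b a k)

lemma InX_block (x : ℤ → ℕ) (hx : InX b a x) (m : ℤ) (l : ℕ) : ∃ n p,
    p + l ≤ (Bword b a n).length ∧ ∀ t < l, (Bword b a n).getD (p + t) 0 = x (m + t) := by
  obtain ⟨n, p, h1, h2⟩ := hx m l
  rw [List.length_ofFn] at h1 h2
  refine ⟨n, p, h1, fun t ht => ?_⟩
  have := congrArg (fun z => z.getD t 0) h2
  rw [List.getD_eq_getElem _ _ (by simp; omega), List.getD_eq_getElem _ _ (by simpa using ht)] at this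
  rw [List.getD_eq_getElem _ _ (by omega)]
  simpa using this

lemma XO_window (hb : 2 ≤ b) (ha1 : 1 ≤ a) (ha2 : a ≤ b - 1) (k : ℕ) (x : ℤ → ℕ)
    (hx : InX b a x) : ∃ i < hseq b (k + 1), XO b a k x i := by
  obtain ⟨n, p, h1, h2⟩ := InX_block x hx (-(hseq b k : ℤ)) (2 * hseq b k + hseq b (k + 1))
  have hl := Bword_length ha2 n
  have hk := hseq_pos (b := b) k
  have hn : k + 1 < n := by
    rw [← (hseq_mono hb).lt_iff_lt]; omega
  obtain ⟨-, -, hq⟩ := QWin_Bword hb ha1 ha2 k n hn.le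
  obtain ⟨i, h3, h4, h5⟩ := hq (p + hseq b k) (by omega)
  refine ⟨i - (p + hseq b k), by omega, ?_⟩
  obtain ⟨j, rfl⟩ : ∃ j, i = p + j + hseq b k := ⟨i - hseq b k - p, by omega⟩
  rw [Occ_iff ha2] at h5
  intro t ht
  rw [Cw_length ha2] at ht
  rw [← h5.2 t ht, add_assoc p j t, h2 (j + t) (by omega)]
  congr 1
  push_cast [show p + j + hseq b k - (p + hseq b k) = j by omega]
  ring

lemma XO_gap (hb : 2 ≤ b) (ha1 : 1 ≤ a) (ha2 : a ≤ b - 1) (k : ℕ) (x : ℤ → ℕ)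
    (hx : InX b a x) (i j : ℕ) (hij : i < j) (hi : XO b a k x i) (hj : XO b a k x j) :
    i + b ^ k * hseq b k + 1 ≤ j := by
  obtain ⟨d, rfl⟩ : ∃ d, j = i + d := ⟨j - i, by omega⟩
  obtain ⟨n, p, h1, h2⟩ := InX_block x hx (i - (hseq b k : ℤ)) (2 * hseq b k + 1 + d)
  have o1 : Occ b a k (Bword b a n) (p + hseq b k) := by
    rw [Occ_iff ha2]
    refine ⟨by omega, fun t ht => ?_⟩
    rw [h2 t (by omega)]
    exact hi t (by rwa [Cw_length ha2])
  have o2 : Occ b a k (Bword b a n) (p + d + hseq b k) := by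
    rw [Occ_iff ha2]
    refine ⟨by omega, fun t ht => ?_⟩
    rw [add_assoc p d t, h2 (d + t) (by omega), ← hj t (by rwa [Cw_length ha2])]
    congr 1
    push_cast; ring
  have := gap_Mw hb ha1 ha2 k n _ _ (by omega) (Occ_level hb ha1 ha2 n k _ o1)
    (Occ_level hb ha1 ha2 n k _ o2)
  omega

lemma XO_succ (hb : 2 ≤ b) (ha1 : 1 ≤ a) (ha2 : a ≤ b - 1) (k : ℕ) (x : ℤ → ℕ) (i : ℤ)
    (h : XO b a (k + 1) x i) : XO b a k x i ∧
      XO b a k x (i - ((b - a) * b ^ k * hseq b k + 1 : ℕ)) := by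
  have o : Occ b a (k + 1) (Cw b a (k + 1)) (hseq b (k + 1)) := ⟨[], [], by simp [Cw], by simp⟩
  obtain ⟨o1, -, o2, -⟩ := Occ_succ hb ha1 ha2 o
  have hs := hseq_split ha2 k
  have key : ∀ j, Occ b a k (Cw b a (k + 1)) j → XO b a k x (i - hseq b (k + 1) + j) := by
    intro j hj
    obtain ⟨q, rfl⟩ : ∃ q, j = q + hseq b k := by
      obtain ⟨v, _, _, h⟩ := hj
      exact ⟨v.length, h.symm⟩
    rw [Occ_iff ha2] at hj
    intro t ht
    rw [Cw_length ha2] at ht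
    rw [← hj.2 t ht, ← h (q + t) (by omega)]
    congr 1
    push_cast; ring
  constructor
  · have := key _ o1
    rwa [sub_add_cancel] at this
  · have := key _ o2
    rw [Nat.cast_sub (by omega)] at this
    convert this using 1; ring

lemma XO_measurable (k : ℕ) : MeasurableSet {x : ℤ → ℕ | XO b a k x 0} := by
  have : {x : ℤ → ℕ | XO b a k x 0} = ⋂ i : ℕ, ⋂ (_ : i < (Cw b a k).length),
      (fun x : ℤ → ℕ => x (0 - (hseq b k : ℤ) + i)) ⁻¹' {(Cw b a k).getD i 0} := by
    ext x; simp [XO, BlockEq]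
  rw [this]
  exact MeasurableSet.iInter fun i => MeasurableSet.iInter fun _ =>
    (measurable_pi_apply _) (measurableSet_singleton _)

lemma shift_iter (n : ℕ) (x : ℤ → ℕ) (i : ℤ) : (shiftMap^[n] x) i = x (i + n) := by
  induction n generalizing x with
  | zero => simp
  | succ n ih =>
    rw [Function.iterate_succ_apply, ih]
    simp only [shiftMap]
    congr 1; push_cast; ring

lemma shift_XO (k n : ℕ) : (shiftMap^[n]) ⁻¹' {x | XO b a k x 0} = {x | XO b a k x n} := by
  ext x
  simp only [Set.mem_preimage, Set.mem_ofPred_eq, XO, BlockEq, shift_iter]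
  refine forall_congr' fun i => imp_congr_right fun _ => ?_
  rw [show (0 - (hseq b k : ℤ) + i + n) = n - hseq b k + i by ring]

end

open Classical in
theorem measure_Sset_bounds (b a : ℕ) (hb : 2 ≤ b) (ha1 : 1 ≤ a) (ha2 : a ≤ b - 1)
    (μ : Measure (ℤ → ℕ)) (hprob : IsProbabilityMeasure μ)
    (hsupp : μ {y | InX b a y}ᶜ = 0) (hinv : MeasurePreserving shiftMap μ μ) (k : ℕ) :
    1 / (hseq b (k + 1) : ℝ≥0∞) < μ (Sset b a k) ∧
      μ (Sset b a k) < (b : ℝ≥0∞) / (hseq b (k + 1) : ℝ≥0∞) := by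
  have hae : ∀ᵐ x ∂μ, InX b a x := hsupp
  have hS : ∀ k, μ (Sset b a k) = μ {x | XO b a k x 0} := by
    intro k
    apply measure_congr
    filter_upwards [hae] with x hx
    apply propext
    change (InX b a x ∧ _) ↔ XO b a k x 0
    simp [hx, XO, Cw]
  have hmeas : ∀ k (n : ℕ), MeasurableSet {x | XO b a k x n} := by
    intro k n
    rw [← shift_XO]
    exact (hinv.iterate n).measurable (XO_measurable k)
  have hμ : ∀ k (n : ℕ), μ {x | XO b a k x n} = μ {x | XO b a k x 0} := by
    intro k n
    rw [← shift_XO]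
    exact (hinv.iterate n).measure_preimage (XO_measurable k).nullMeasurableSet
  have hint : ∀ k N : ℕ, ∫⁻ x, ∑ n ∈ Finset.range N,
      ({x | XO b a k x (n : ℤ)} : Set (ℤ → ℕ)).indicator 1 x ∂μ = N * μ {x | XO b a k x 0} := by
    intro k N
    rw [lintegral_finsetSum]
    · simp [lintegral_indicator_one (hmeas k _), hμ]
    · intro n _
      exact measurable_one.indicator (hmeas k n)
  have hcount : ∀ k N (x : ℤ → ℕ), ∑ n ∈ Finset.range N,
      ({x | XO b a k x (n : ℤ)} : Set (ℤ → ℕ)).indicator (1 : (ℤ → ℕ) → ℝ≥0∞) x =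
      (((Finset.range N).filter (fun n : ℕ => XO b a k x n)).card : ℝ≥0∞) := by
    intro k N x
    simp [Set.indicator_apply, Finset.sum_ite]
  have hH : ∀ k, (hseq b k : ℝ≥0∞) ≠ 0 := by
    intro k; have := hseq_pos (b := b) k; simp; omega
  -- weak lower bound
  have hweak : ∀ k, μ {x | XO b a k x 0} ≠ 0 := by
    intro k h0
    have h1 := hint k (hseq b (k + 1))
    rw [h0, mul_zero] at h1
    have : (1 : ℝ≥0∞) ≤ 0 := by
      rw [← h1]
      calc (1 : ℝ≥0∞) = ∫⁻ x, 1 ∂μ := by simp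
        _ ≤ _ := by
          apply lintegral_mono_ae
          filter_upwards [hae] with x hx
          rw [hcount]
          obtain ⟨i, hi, hi'⟩ := XO_window hb ha1 ha2 k x hx
          have : 0 < ((Finset.range (hseq b (k + 1))).filter (fun n : ℕ => XO b a k x n)).card :=
            Finset.card_pos.2 ⟨i, by simp [hi, hi']⟩
          exact_mod_cast this
    simp at this
  have hs := hseq_split ha2 k
  have hpos : 1 ≤ b ^ k * hseq b k := Nat.mul_pos (Nat.pow_pos (by omega)) (hseq_pos k)
  have hα : 1 ≤ a * b ^ k * hseq b k := by rw [mul_assoc]; exact Nat.mul_pos ha1 hpos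
  rw [hS]
  constructor
  · rw [ENNReal.div_lt_iff (Or.inl (hH _)) (Or.inl (by simp)), mul_comm, ← hint]
    set A := (b - a) * b ^ k * hseq b k + 1 with hA
    have h1 : (1 : ℝ≥0∞) < ∫⁻ x, (1 + ({x | XO b a (k + 1) x (A : ℕ)} : Set (ℤ → ℕ)).indicator 1 x) ∂μ := by
      rw [lintegral_add_left measurable_const, lintegral_indicator_one (hmeas _ _), hμ]
      simp only [lintegral_const, measure_univ, mul_one]
      exact ENNReal.lt_add_right (by simp) (hweak _)
    refine h1.trans_le ?_
    apply lintegral_mono_ae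
    filter_upwards [hae] with x hx
    rw [hcount]
    by_cases hxA : XO b a (k + 1) x (A : ℕ)
    · rw [Set.indicator_of_mem (by exact hxA)]
      obtain ⟨o1, o2⟩ := XO_succ hb ha1 ha2 k x _ hxA
      rw [← hA, sub_self] at o2
      have : 1 < ((Finset.range (hseq b (k + 1))).filter (fun n : ℕ => XO b a k x n)).card := by
        rw [Finset.one_lt_card]
        refine ⟨0, ?_, A, ?_, by omega⟩
        · simp only [Finset.mem_filter, Finset.mem_range]
          exact ⟨by omega, by simpa using o2⟩
        · simp only [Finset.mem_filter, Finset.mem_range]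
          exact ⟨by omega, o1⟩
      have h2 : 1 + 1 ≤ ((Finset.range (hseq b (k + 1))).filter (fun n : ℕ => XO b a k x n)).card := this
      simp only [Pi.one_apply]
      exact_mod_cast h2
    · rw [Set.indicator_of_notMem (by exact hxA), add_zero]
      obtain ⟨i, hi, hi'⟩ := XO_window hb ha1 ha2 k x hx
      have : 0 < ((Finset.range (hseq b (k + 1))).filter (fun n : ℕ => XO b a k x n)).card :=
        Finset.card_pos.2 ⟨i, by simp [hi, hi']⟩
      exact_mod_cast this
  · have h1 : ((b ^ k * hseq b k + 1 : ℕ) : ℝ≥0∞) * μ {x | XO b a k x 0} ≤ 1 := by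
      rw [← hint]
      calc _ ≤ ∫⁻ x, 1 ∂μ := by
            apply lintegral_mono_ae
            filter_upwards [hae] with x hx
            rw [hcount]
            have : ((Finset.range (b ^ k * hseq b k + 1)).filter
                (fun n : ℕ => XO b a k x n)).card ≤ 1 := by
              rw [Finset.card_le_one]
              intro i hi j hj
              simp only [Finset.mem_filter, Finset.mem_range] at hi hj
              by_contra hne
              rcases Nat.lt_or_gt_of_ne hne with h | h
              · have := XO_gap hb ha1 ha2 k x hx i j h hi.2 hj.2; omega
              · have := XO_gap hb ha1 ha2 k x hx j i h hj.2 hi.2; omega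
            exact_mod_cast this
        _ = 1 := by simp
    rw [ENNReal.lt_div_iff_mul_lt (Or.inl (hH _)) (Or.inl (by simp))]
    have hlt : hseq b (k + 1) < b * (b ^ k * hseq b k + 1) := by
      simp only [hseq, pow_succ]; nlinarith
    calc μ {x | XO b a k x 0} * (hseq b (k + 1) : ℝ≥0∞)
        < μ {x | XO b a k x 0} * ((b * (b ^ k * hseq b k + 1) : ℕ) : ℝ≥0∞) := by
          apply ENNReal.mul_lt_mul_right (hweak k) (measure_ne_top _ _)
          exact_mod_cast hlt
      _ = b * (((b ^ k * hseq b k + 1 : ℕ) : ℝ≥0∞) * μ {x | XO b a k x 0}) := by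
          push_cast; ring
      _ ≤ b * 1 := by gcongr
      _ = b := mul_one _
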